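/- Let α > −1 and n ≥ 1, let ψ be analytic on 𝔻, not identically 0, and φ a nonconstant analytic self-map of 𝔻, with D_{ψ,φ,n} bounded on A_α². Then D_{ψ,φ,n} is self-adjoint if and only if ψ(z) = a z^n/(n! (1 − conj(c) z)^{n+α+2}) and φ(z) = c + b z/(1 − conj(c) z), where a = ψ^{(n)}(0) and b = φ′(0) are both nonzero real numbers and c = φ(0) ∈ 𝔻. -/

import Mathlib

open Complex Metric Set

noncomputable section

/-- The open unit disk in `ℂ`. -/
def unitDisk : Set ℂ := Metric.ball 0 1

/-- `wb2 α j` is `β(j)² = j!·Γ(α+2)/Γ(j+α+2)`, the square of the norm of `z^j` in `A_α²`. -/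
def wb2 (α : ℝ) (j : ℕ) : ℝ :=
  (j.factorial : ℝ) * Real.Gamma (α + 2) / Real.Gamma ((j : ℝ) + α + 2)

/-- The `j`-th Taylor coefficient of `f` at `0`. -/
def tcoeff (f : ℂ → ℂ) (j : ℕ) : ℂ := iteratedDeriv j f 0 / (j.factorial : ℂ)

/-- An abstract model of the weighted Bergman space `A_α²`: a complex Hilbert space `H`
whose elements are (identified with) the analytic functions on the unit disk with
square-summable weighted Taylor coefficients, with the weighted `ℓ²` inner product. -/
structure BergmanModel (α : ℝ) (H : Type) [NormedAddCommGroup H]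
    [InnerProductSpace ℂ H] where
  emb : H →ₗ[ℂ] (ℂ → ℂ)
  analyticOn : ∀ f : H, AnalyticOnNhd ℂ (emb f) unitDisk
  summable_norm : ∀ f : H, Summable (fun j => ‖tcoeff (emb f) j‖ ^ 2 * wb2 α j)
  inj : ∀ f g : H, Set.EqOn (emb f) (emb g) unitDisk → f = g
  exists_rep : ∀ F : ℂ → ℂ, AnalyticOnNhd ℂ F unitDisk →
      Summable (fun j => ‖tcoeff F j‖ ^ 2 * wb2 α j) →
      ∃ f : H, Set.EqOn (emb f) F unitDisk
  inner_eq : ∀ f g : H,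
      (@inner ℂ H _ f g) =
        ∑' j : ℕ, (starRingEnd ℂ) (tcoeff (emb f) j) * tcoeff (emb g) j * (wb2 α j : ℂ)

/-- The derivative-evaluation kernel `K_w^{(m)}(z) = m!·z^m / (β(m)²·(1-conj(w)·z)^(m+α+2))`. -/
def kern (α : ℝ) (m : ℕ) (w z : ℂ) : ℂ :=
  (m.factorial : ℂ) * z ^ m /
    ((wb2 α m : ℂ) * (1 - (starRingEnd ℂ) w * z) ^ ((m : ℂ) + (α : ℂ) + 2))


lemma disk_iff (z : ℂ) : z ∈ unitDisk ↔ ‖z‖ < 1 := by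
  simp [unitDisk]

lemma isOpen_unitDisk : IsOpen unitDisk := Metric.isOpen_ball

lemma zero_mem_disk : (0 : ℂ) ∈ unitDisk := by simp [disk_iff]

lemma conj_mem_disk {z : ℂ} (hz : z ∈ unitDisk) : (starRingEnd ℂ) z ∈ unitDisk := by
  rw [disk_iff] at *
  simpa using hz

lemma re_pos_of_disk {u z : ℂ} (hu : u ∈ unitDisk) (hz : z ∈ unitDisk) :
    0 < (1 - u * z).re := by
  rw [disk_iff] at *
  have h1 : ‖u * z‖ < 1 := by
    rw [norm_mul]
    nlinarith [norm_nonneg u, norm_nonneg z]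
  have := Complex.re_le_norm (u * z)
  simp only [sub_re, one_re]
  linarith

lemma slit_of_disk {u z : ℂ} (hu : u ∈ unitDisk) (hz : z ∈ unitDisk) :
    1 - u * z ∈ slitPlane := Or.inl (re_pos_of_disk hu hz)

lemma ne_of_disk {u z : ℂ} (hu : u ∈ unitDisk) (hz : z ∈ unitDisk) :
    1 - u * z ≠ 0 := slitPlane_ne_zero (slit_of_disk hu hz)

lemma cpow_ne_of_disk {u z : ℂ} (hu : u ∈ unitDisk) (hz : z ∈ unitDisk) (s : ℂ) :
    (1 - u * z) ^ s ≠ 0 := by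
  rw [Ne, cpow_eq_zero_iff]
  exact fun h => ne_of_disk hu hz h.1

lemma cpow_mul_of_re_pos {x y : ℂ} (hx : 0 < x.re) (hy : 0 < y.re) (s : ℂ) :
    x ^ s * y ^ s = (x * y) ^ s := by
  have hx0 : x ≠ 0 := by rintro rfl; simp at hx
  have hy0 : y ≠ 0 := by rintro rfl; simp at hy
  have ax := abs_lt.1 (abs_arg_lt_pi_div_two_iff.2 (Or.inl hx))
  have ay := abs_lt.1 (abs_arg_lt_pi_div_two_iff.2 (Or.inl hy))
  rw [cpow_def_of_ne_zero hx0, cpow_def_of_ne_zero hy0, cpow_def_of_ne_zero (mul_ne_zero hx0 hy0),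
    Complex.log_mul hx0 hy0 ⟨by linarith, by linarith⟩, ← Complex.exp_add]
  congr 1
  ring

lemma conj_cpow_real {x : ℂ} (hx : x ∈ slitPlane) (s : ℝ) :
    (starRingEnd ℂ) (x ^ (s : ℂ)) = ((starRingEnd ℂ) x) ^ (s : ℂ) := by
  rw [conj_cpow _ _ (slitPlane_arg_ne_pi hx), conj_ofReal]

/-- The reproducing kernel, as a function of `u = conj w`. -/
def kfun (α : ℝ) (u z : ℂ) : ℂ := (1 - u * z) ^ (-((α : ℂ) + 2))

def gcoef (α : ℝ) (k : ℕ) : ℝ := Real.Gamma ((k : ℝ) + α + 2) / Real.Gamma (α + 2)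

lemma gcoef_pos {α : ℝ} (hα : -1 < α) (k : ℕ) : 0 < gcoef α k := by
  have hk : (0 : ℝ) ≤ k := Nat.cast_nonneg k
  exact div_pos (Real.Gamma_pos_of_pos (by linarith)) (Real.Gamma_pos_of_pos (by linarith))

lemma gcoef_succ {α : ℝ} (hα : -1 < α) (k : ℕ) :
    gcoef α (k + 1) = ((k : ℝ) + α + 2) * gcoef α k := by
  have hk : (0 : ℝ) ≤ k := Nat.cast_nonneg k
  have h : Real.Gamma (((k + 1 : ℕ) : ℝ) + α + 2)
      = ((k : ℝ) + α + 2) * Real.Gamma ((k : ℝ) + α + 2) := by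
    rw [← Real.Gamma_add_one (by linarith)]
    congr 1
    push_cast
    ring
  rw [gcoef, gcoef, h, mul_div_assoc]

lemma wb2_eq {α : ℝ} (k : ℕ) : wb2 α k = k.factorial / gcoef α k := by
  rw [wb2, gcoef, div_div_eq_mul_div]

lemma kfun_analytic (α : ℝ) {u : ℂ} (hu : u ∈ unitDisk) :
    AnalyticOnNhd ℂ (kfun α u) unitDisk := by
  intro z hz
  unfold kfun
  exact AnalyticAt.cpow (by fun_prop) analyticAt_const (slit_of_disk hu hz)

lemma kfun_iter {α : ℝ} (hα : -1 < α) {u : ℂ} (hu : u ∈ unitDisk) (k : ℕ) :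
    ∀ z ∈ unitDisk, iteratedDeriv k (kfun α u) z
      = (gcoef α k : ℂ) * u ^ k * (1 - u * z) ^ (-((k : ℂ) + (α : ℂ) + 2)) := by
  induction k with
  | zero =>
    intro z hz
    have : gcoef α 0 = 1 := by
      rw [gcoef]
      simp only [Nat.cast_zero, zero_add]
      exact div_self (Real.Gamma_pos_of_pos (by linarith)).ne'
    simp [this, kfun]
  | succ k ih =>
    intro z hz
    rw [iteratedDeriv_succ]
    have he : iteratedDeriv k (kfun α u) =ᶠ[nhds z]
        fun z => (gcoef α k : ℂ) * u ^ k * (1 - u * z) ^ (-((k : ℂ) + (α : ℂ) + 2)) := by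
      filter_upwards [isOpen_unitDisk.mem_nhds hz] with y hy using ih y hy
    rw [he.deriv_eq]
    have h1 : HasDerivAt (fun z => 1 - u * z) (-u) z := by
      simpa using ((hasDerivAt_id z).const_mul u).const_sub 1
    have h2 := (h1.cpow_const (c := -((k : ℂ) + (α : ℂ) + 2)) (slit_of_disk hu hz)).const_mul
      ((gcoef α k : ℂ) * u ^ k)
    rw [h2.deriv, gcoef_succ hα]
    have : (-((k : ℂ) + (α : ℂ) + 2) - 1) = -(((k + 1 : ℕ) : ℂ) + (α : ℂ) + 2) := by
      push_cast
      ring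
    rw [this]
    push_cast
    ring

lemma kfun_tcoeff {α : ℝ} (hα : -1 < α) {u : ℂ} (hu : u ∈ unitDisk) (k : ℕ) :
    tcoeff (kfun α u) k * (wb2 α k : ℂ) = u ^ k := by
  have h1 : (gcoef α k : ℂ) ≠ 0 := by exact_mod_cast (gcoef_pos hα k).ne'
  have h2 : (k.factorial : ℂ) ≠ 0 := by exact_mod_cast k.factorial_ne_zero
  rw [tcoeff, kfun_iter hα hu k 0 zero_mem_disk, wb2_eq]
  push_cast
  simp
  field_simp

lemma taylor_hasSum {f : ℂ → ℂ} (hf : AnalyticOnNhd ℂ f unitDisk) {z : ℂ} (hz : z ∈ unitDisk) :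
    HasSum (fun j => tcoeff f j * z ^ j) (f z) := by
  have := Complex.hasSum_taylorSeries_on_ball (c := 0) (r := 1) (f := f)
    hf.differentiableOn (z := z) hz
  have he : (fun j => tcoeff f j * z ^ j) = fun j : ℕ =>
      (j.factorial : ℂ)⁻¹ • (z - 0) ^ j • iteratedDeriv j f 0 := by
    funext j
    rw [tcoeff, sub_zero, smul_eq_mul, smul_eq_mul]
    ring
  rw [he]
  exact this

lemma kfun_summable {α : ℝ} (hα : -1 < α) {u : ℂ} (hu : u ∈ unitDisk) :
    Summable (fun j => ‖tcoeff (kfun α u) j‖ ^ 2 * wb2 α j) := by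
  have h := (taylor_hasSum (kfun_analytic α hu) hu).summable.norm
  refine h.congr fun j => ?_
  have hw : 0 < wb2 α j := by
    rw [wb2_eq]
    exact div_pos (by exact_mod_cast j.factorial_pos) (gcoef_pos hα j)
  have h1 := congrArg norm (kfun_tcoeff hα hu j)
  rw [norm_mul, Complex.norm_real, Real.norm_of_nonneg hw.le] at h1
  rw [norm_mul, ← h1]
  ring

lemma tcoeff_congr {f g : ℂ → ℂ} (h : Set.EqOn f g unitDisk) (j : ℕ) :
    tcoeff f j = tcoeff g j := by
  rw [tcoeff, tcoeff, h.iteratedDeriv_of_isOpen isOpen_unitDisk j zero_mem_disk]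

lemma exists_kernel {α : ℝ} (hα : -1 < α) {H : Type} [NormedAddCommGroup H]
    [InnerProductSpace ℂ H] (M : BergmanModel α H) {w : ℂ} (hw : w ∈ unitDisk) :
    ∃ K : H, Set.EqOn (M.emb K) (kfun α ((starRingEnd ℂ) w)) unitDisk ∧
      ∀ f : H, @inner ℂ H _ K f = M.emb f w := by
  have hu := conj_mem_disk hw
  obtain ⟨K, hK⟩ := M.exists_rep _ (kfun_analytic α hu) (kfun_summable hα hu)
  refine ⟨K, hK, fun f => ?_⟩
  rw [M.inner_eq, ← (taylor_hasSum (M.analyticOn f) hw).tsum_eq]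
  congr 1
  ext j
  have h1 := congrArg (starRingEnd ℂ) (kfun_tcoeff hα hu j)
  rw [map_mul, map_pow, conj_conj, conj_ofReal] at h1
  rw [tcoeff_congr hK, ← h1]
  ring

/-- Self-adjointness in terms of the kernel identity. -/
lemma selfAdj_iff {α : ℝ} (hα : -1 < α) (n : ℕ)
    {H : Type} [NormedAddCommGroup H] [InnerProductSpace ℂ H] [CompleteSpace H]
    (M : BergmanModel α H) (ψ φ : ℂ → ℂ)
    (hφm : ∀ z ∈ unitDisk, φ z ∈ unitDisk)
    (T : H →L[ℂ] H)
    (hT : ∀ f : H, ∀ z ∈ unitDisk,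
      M.emb (T f) z = ψ z * iteratedDeriv n (M.emb f) (φ z)) :
    ContinuousLinearMap.adjoint T = T ↔
      ∀ z ∈ unitDisk, ∀ u ∈ unitDisk,
        ψ z * u ^ n * (1 - u * φ z) ^ (-((n : ℂ) + (α : ℂ) + 2)) =
        (starRingEnd ℂ) (ψ ((starRingEnd ℂ) u)) * z ^ n *
          (1 - z * (starRingEnd ℂ) (φ ((starRingEnd ℂ) u))) ^ (-((n : ℂ) + (α : ℂ) + 2)) := by
  choose! K hK hKf using fun (w : ℂ) (hw : w ∈ unitDisk) => exists_kernel hα M hw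
  have hTK : ∀ u ∈ unitDisk, ∀ z ∈ unitDisk, M.emb (T (K ((starRingEnd ℂ) u))) z
      = (gcoef α n : ℂ) * (ψ z * u ^ n * (1 - u * φ z) ^ (-((n : ℂ) + (α : ℂ) + 2))) := by
    intro u hu z hz
    have h1 := hK _ (conj_mem_disk hu)
    rw [conj_conj] at h1
    rw [hT _ z hz, h1.iteratedDeriv_of_isOpen isOpen_unitDisk n (hφm z hz),
      kfun_iter hα hu n _ (hφm z hz)]
    ring
  have hzero : ∀ h : H, (∀ w ∈ unitDisk, @inner ℂ H _ (K w) h = 0) → h = 0 := by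
    intro h hh
    apply M.inj
    intro w hw
    rw [← hKf w hw, hh w hw, map_zero]
    rfl
  have hsymm : (∀ z ∈ unitDisk, ∀ u ∈ unitDisk,
      @inner ℂ H _ (K z) (T (K ((starRingEnd ℂ) u)))
        = @inner ℂ H _ (T (K z)) (K ((starRingEnd ℂ) u))) ↔
      ∀ z ∈ unitDisk, ∀ u ∈ unitDisk,
        ψ z * u ^ n * (1 - u * φ z) ^ (-((n : ℂ) + (α : ℂ) + 2)) =
        (starRingEnd ℂ) (ψ ((starRingEnd ℂ) u)) * z ^ n *
          (1 - z * (starRingEnd ℂ) (φ ((starRingEnd ℂ) u))) ^ (-((n : ℂ) + (α : ℂ) + 2)) := by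
    refine forall₂_congr fun z hz => forall₂_congr fun u hu => ?_
    have hcu := conj_mem_disk hu
    have hcz := conj_mem_disk hz
    have e : (-((n : ℂ) + (α : ℂ) + 2)) = ((-((n : ℝ) + α + 2) : ℝ) : ℂ) := by push_cast; ring
    have h2 := hTK _ hcz _ hcu
    rw [conj_conj] at h2
    have hg : (gcoef α n : ℂ) ≠ 0 := by exact_mod_cast (gcoef_pos hα n).ne'
    rw [hKf z hz, hTK u hu z hz, ← inner_conj_symm, hKf _ hcu, h2, map_mul, conj_ofReal,
      mul_right_inj' hg, e, map_mul, conj_cpow_real (slit_of_disk hcz (hφm _ hcu))]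
    simp
  rw [← hsymm]
  constructor
  · intro h z hz u hu
    nth_rewrite 1 [← h]
    rw [ContinuousLinearMap.adjoint_inner_right]
  · intro h
    have h1 : ∀ w ∈ unitDisk, ContinuousLinearMap.adjoint T (K w) = T (K w) := by
      intro w hw
      rw [← sub_eq_zero]
      apply hzero
      intro v hv
      have := h v hv _ (conj_mem_disk hw)
      rw [conj_conj] at this
      rw [inner_sub_right, ContinuousLinearMap.adjoint_inner_right, this, sub_self]
    ext f
    rw [← sub_eq_zero]
    apply hzero
    intro v hv
    rw [inner_sub_right, ContinuousLinearMap.adjoint_inner_right, ← h1 v hv,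
      ContinuousLinearMap.adjoint_inner_left, sub_self]

lemma backward_identity {α : ℝ} (n : ℕ) (ψ φ : ℂ → ℂ)
    (hφm : ∀ z ∈ unitDisk, φ z ∈ unitDisk) (a b : ℝ)
    (hψ : ∀ z ∈ unitDisk, ψ z = (a : ℂ) * z ^ n /
          ((n.factorial : ℂ) * (1 - (starRingEnd ℂ) (φ 0) * z) ^ ((n : ℂ) + (α : ℂ) + 2)))
    (hφ : ∀ z ∈ unitDisk, φ z = φ 0 + (b : ℂ) * z / (1 - (starRingEnd ℂ) (φ 0) * z)) :
    ∀ z ∈ unitDisk, ∀ u ∈ unitDisk,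
        ψ z * u ^ n * (1 - u * φ z) ^ (-((n : ℂ) + (α : ℂ) + 2)) =
        (starRingEnd ℂ) (ψ ((starRingEnd ℂ) u)) * z ^ n *
          (1 - z * (starRingEnd ℂ) (φ ((starRingEnd ℂ) u))) ^ (-((n : ℂ) + (α : ℂ) + 2)) := by
  intro z hz u hu
  have hc := hφm 0 zero_mem_disk
  have hcc := conj_mem_disk hc
  have hcu := conj_mem_disk hu
  have e : (((n : ℂ) + (α : ℂ) + 2)) = ((((n : ℝ) + α + 2) : ℝ) : ℂ) := by push_cast; ring
  have p1 : ψ z = (a : ℂ) * z ^ n / (n.factorial : ℂ) *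
      (1 - (starRingEnd ℂ) (φ 0) * z) ^ (-((n : ℂ) + (α : ℂ) + 2)) := by
    rw [hψ z hz, cpow_neg]
    field_simp
  have p2 : (starRingEnd ℂ) (ψ ((starRingEnd ℂ) u)) = (a : ℂ) * u ^ n / (n.factorial : ℂ) *
      (1 - φ 0 * u) ^ (-((n : ℂ) + (α : ℂ) + 2)) := by
    rw [hψ _ hcu, cpow_neg, e, map_div₀, map_mul, map_mul, conj_cpow_real (slit_of_disk hcc hcu)]
    simp
    field_simp
  have q : (1 - (starRingEnd ℂ) (φ 0) * z) * (1 - u * φ z) =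
      (1 - φ 0 * u) * (1 - z * (starRingEnd ℂ) (φ ((starRingEnd ℂ) u))) := by
    have n1 := ne_of_disk hcc hz
    have n2 := ne_of_disk hc hu
    have n3 : 1 - u * φ 0 ≠ 0 := ne_of_disk hu hc
    rw [hφ z hz, hφ _ hcu]
    simp only [map_add, map_div₀, map_mul, map_sub, map_one, conj_conj, conj_ofReal]
    field_simp
    ring
  rw [p1, p2]
  calc _ = (a : ℂ) * z ^ n * u ^ n / (n.factorial : ℂ) *
      ((1 - (starRingEnd ℂ) (φ 0) * z) ^ (-((n : ℂ) + (α : ℂ) + 2)) *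
        (1 - u * φ z) ^ (-((n : ℂ) + (α : ℂ) + 2))) := by ring
    _ = (a : ℂ) * z ^ n * u ^ n / (n.factorial : ℂ) *
      ((1 - φ 0 * u) ^ (-((n : ℂ) + (α : ℂ) + 2)) *
        (1 - z * (starRingEnd ℂ) (φ ((starRingEnd ℂ) u))) ^ (-((n : ℂ) + (α : ℂ) + 2))) := by
        rw [cpow_mul_of_re_pos (re_pos_of_disk hcc hz) (re_pos_of_disk hu (hφm z hz)), q,
          cpow_mul_of_re_pos (re_pos_of_disk hc hu)
            (re_pos_of_disk hz (conj_mem_disk (hφm _ hcu)))]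
    _ = _ := by ring

lemma iter_pow_mul (n : ℕ) {g : ℂ → ℂ} (hg : AnalyticAt ℂ g 0) :
    iteratedDeriv n (fun z => z ^ n * g z) 0 = n.factorial * g 0 := by
  have h := iteratedDeriv_mul (n := n) (x := (0 : ℂ)) (f := fun z : ℂ => z ^ n) (g := g)
    (by fun_prop) hg.contDiffAt
  have h' : (fun z => z ^ n * g z) = (fun z : ℂ => z ^ n) * g := rfl
  rw [h', h, Finset.sum_range_succ, Finset.sum_eq_zero]
  · rw [iteratedDeriv_fun_pow_zero]
    simp
  · intro i hi
    have : i ≠ n := (Finset.mem_range.1 hi).ne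
    rw [iteratedDeriv_fun_pow_zero, if_neg this]
    simp

/-- The analytic part of the forward direction. -/
lemma forward_analysis {α : ℝ} (hα : -1 < α) (n : ℕ) (hn : 1 ≤ n) (ψ φ : ℂ → ℂ)
    (hψ0 : ∃ z ∈ unitDisk, ψ z ≠ 0)
    (hφa : AnalyticOnNhd ℂ φ unitDisk)
    (hφm : ∀ z ∈ unitDisk, φ z ∈ unitDisk)
    (hφnc : ∃ z ∈ unitDisk, ∃ w ∈ unitDisk, φ z ≠ φ w)
    (E : ∀ z ∈ unitDisk, ∀ u ∈ unitDisk,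
        ψ z * u ^ n * (1 - u * φ z) ^ (-((n : ℂ) + (α : ℂ) + 2)) =
        (starRingEnd ℂ) (ψ ((starRingEnd ℂ) u)) * z ^ n *
          (1 - z * (starRingEnd ℂ) (φ ((starRingEnd ℂ) u))) ^ (-((n : ℂ) + (α : ℂ) + 2))) :
    ∃ a b : ℝ, a ≠ 0 ∧ b ≠ 0 ∧
        iteratedDeriv n ψ 0 = (a : ℂ) ∧ deriv φ 0 = (b : ℂ) ∧
        (∀ z ∈ unitDisk, ψ z = (a : ℂ) * z ^ n /
          ((n.factorial : ℂ) * (1 - (starRingEnd ℂ) (φ 0) * z) ^ ((n : ℂ) + (α : ℂ) + 2))) ∧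
        (∀ z ∈ unitDisk, φ z = φ 0 + (b : ℂ) * z / (1 - (starRingEnd ℂ) (φ 0) * z)) := by
  have hs : -((n : ℂ) + (α : ℂ) + 2) ≠ 0 := by
    have : (0 : ℝ) < (n : ℝ) + α + 2 := by
      have : (0 : ℝ) ≤ n := Nat.cast_nonneg n
      linarith
    have h2 : (n : ℂ) + (α : ℂ) + 2 = (((n : ℝ) + α + 2 : ℝ) : ℂ) := by push_cast; ring
    rw [h2, neg_ne_zero]
    exact_mod_cast this.ne'
  have hSS : ∀ x : ℂ, x ^ ((n : ℂ) + (α : ℂ) + 2) = (x ^ (-((n : ℂ) + (α : ℂ) + 2)))⁻¹ := by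
    intro x
    rw [cpow_neg, inv_inv]
  simp only [hSS]
  clear hSS
  set S : ℂ := -((n : ℂ) + (α : ℂ) + 2) with hS
  have hn0 : n ≠ 0 := by omega
  have hφa' : AnalyticOnNhd ℂ (fun u => (starRingEnd ℂ) (φ ((starRingEnd ℂ) u))) unitDisk := by
    apply DifferentiableOn.analyticOnNhd _ isOpen_unitDisk
    intro u hu
    have h := (hφa _ (conj_mem_disk hu)).differentiableAt.conj_conj
    rw [conj_conj] at h
    exact h.differentiableWithinAt
  have hφm' : ∀ u ∈ unitDisk, (starRingEnd ℂ) (φ ((starRingEnd ℂ) u)) ∈ unitDisk :=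
    fun u hu => conj_mem_disk (hφm _ (conj_mem_disk hu))
  -- ψ 0 = 0
  have hψz : ψ 0 = 0 := by
    have hh : (1 / 2 : ℂ) ∈ unitDisk := by rw [disk_iff]; norm_num
    have := E 0 zero_mem_disk (1 / 2) hh
    rw [zero_pow hn0, mul_zero, zero_mul, mul_eq_zero, mul_eq_zero] at this
    rcases this with (h | h) | h
    · exact h
    · exact absurd h (pow_ne_zero _ (by norm_num))
    · exact absurd h (cpow_ne_of_disk hh (hφm 0 zero_mem_disk) _)
  obtain ⟨w0, hw0, hψw0⟩ := hψ0
  have hw00 : w0 ≠ 0 := by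
    rintro rfl
    exact hψw0 hψz
  set u0 := (starRingEnd ℂ) w0 with hu0
  have hu0m : u0 ∈ unitDisk := conj_mem_disk hw0
  have hu00 : u0 ≠ 0 := by simpa [hu0] using hw00
  have hψu0 : (starRingEnd ℂ) (ψ ((starRingEnd ℂ) u0)) ≠ 0 := by
    rw [hu0, conj_conj]
    simpa using hψw0
  obtain ⟨g, hga, hgne, hgψ⟩ : ∃ g : ℂ → ℂ, AnalyticOnNhd ℂ g unitDisk ∧
      (∀ z ∈ unitDisk, g z ≠ 0) ∧ ∀ z ∈ unitDisk, ψ z = z ^ n * g z := by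
    refine ⟨fun z => (starRingEnd ℂ) (ψ ((starRingEnd ℂ) u0)) *
      (1 - z * (starRingEnd ℂ) (φ ((starRingEnd ℂ) u0))) ^ S /
      (u0 ^ n * (1 - u0 * φ z) ^ S), ?_, ?_, ?_⟩
    · intro z hz
      refine AnalyticAt.div ?_ ?_ (mul_ne_zero (pow_ne_zero _ hu00)
        (cpow_ne_of_disk hu0m (hφm z hz) _))
      · exact analyticAt_const.mul (AnalyticAt.cpow (by fun_prop) analyticAt_const
          (slit_of_disk hz (hφm' _ hu0m)))
      · exact analyticAt_const.mul (AnalyticAt.cpow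
          (analyticAt_const.sub (analyticAt_const.mul (hφa z hz))) analyticAt_const
          (slit_of_disk hu0m (hφm z hz)))
    · intro z hz
      exact div_ne_zero (mul_ne_zero hψu0 (cpow_ne_of_disk hz (hφm' _ hu0m) _))
        (mul_ne_zero (pow_ne_zero _ hu00) (cpow_ne_of_disk hu0m (hφm z hz) _))
    · intro z hz
      have := E z hz u0 hu0m
      have k1 := pow_ne_zero n hu00
      have k2 := cpow_ne_of_disk hu0m (hφm z hz) S
      rw [← mul_div_assoc, eq_div_iff (mul_ne_zero k1 k2)]
      linear_combination this
  -- the reduced identity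
  have E2 : ∀ z ∈ unitDisk, z ≠ 0 → ∀ u ∈ unitDisk, u ≠ 0 →
      g z * (1 - u * φ z) ^ S = (starRingEnd ℂ) (g ((starRingEnd ℂ) u)) *
        (1 - z * (starRingEnd ℂ) (φ ((starRingEnd ℂ) u))) ^ S := by
    intro z hz hz0 u hu hu0
    have h := E z hz u hu
    rw [hgψ z hz, hgψ _ (conj_mem_disk hu)] at h
    simp only [map_mul, map_pow, conj_conj] at h
    have k : z ^ n * u ^ n ≠ 0 := mul_ne_zero (pow_ne_zero _ hz0) (pow_ne_zero _ hu0)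
    apply mul_left_cancel₀ k
    linear_combination h
  have hgc : ContinuousAt (fun u => (starRingEnd ℂ) (g ((starRingEnd ℂ) u))) 0 := by
    have : ContinuousAt g ((starRingEnd ℂ) 0) := by
      rw [map_zero]; exact (hga 0 zero_mem_disk).continuousAt
    exact Complex.continuous_conj.continuousAt.comp
      (this.comp Complex.continuous_conj.continuousAt)
  have hD0 : ∀ᶠ u in nhdsWithin (0 : ℂ) {0}ᶜ, u ∈ unitDisk ∧ u ≠ 0 := by
    filter_upwards [mem_nhdsWithin_of_mem_nhds (isOpen_unitDisk.mem_nhds zero_mem_disk),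
      self_mem_nhdsWithin] with u h1 h2 using ⟨h1, h2⟩
  have heq_of : ∀ F G : ℂ → ℂ, ContinuousAt F 0 → ContinuousAt G 0 →
      (∀ u ∈ unitDisk, u ≠ 0 → F u = G u) → F 0 = G 0 := by
    intro F G hF hG h
    refine tendsto_nhds_unique_of_eventuallyEq (l := nhdsWithin (0 : ℂ) {0}ᶜ)
      (hF.tendsto.mono_left nhdsWithin_le_nhds) (hG.tendsto.mono_left nhdsWithin_le_nhds) ?_
    filter_upwards [hD0] with u hu using h u hu.1 hu.2
  have hcpowA : ∀ z ∈ unitDisk, AnalyticAt ℂ (fun u => (1 - u * φ z) ^ S) 0 := fun z hz =>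
    AnalyticAt.cpow (by fun_prop) analyticAt_const (slit_of_disk zero_mem_disk (hφm z hz))
  have hcpowB : ∀ z ∈ unitDisk, AnalyticAt ℂ
      (fun u => (1 - z * (starRingEnd ℂ) (φ ((starRingEnd ℂ) u))) ^ S) 0 := fun z hz =>
    AnalyticAt.cpow (analyticAt_const.sub (analyticAt_const.mul (hφa' 0 zero_mem_disk)))
      analyticAt_const (slit_of_disk hz (hφm' 0 zero_mem_disk))
  have hc := hφm 0 zero_mem_disk
  have hcc := conj_mem_disk hc
  have G1 : ∀ z ∈ unitDisk, z ≠ 0 →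
      g z = (starRingEnd ℂ) (g 0) * (1 - (starRingEnd ℂ) (φ 0) * z) ^ S := by
    intro z hz hz0
    have := heq_of _ _ (continuousAt_const.mul (hcpowA z hz).continuousAt)
      (hgc.mul (hcpowB z hz).continuousAt) (E2 z hz hz0)
    simpa [mul_comm z] using this
  have hkA : AnalyticAt ℂ (fun z => (1 - (starRingEnd ℂ) (φ 0) * z) ^ S) 0 :=
    AnalyticAt.cpow (by fun_prop) analyticAt_const (slit_of_disk hcc zero_mem_disk)
  have G0 : g 0 = (starRingEnd ℂ) (g 0) := by
    have := heq_of _ _ (hga 0 zero_mem_disk).continuousAt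
      (continuousAt_const.mul hkA.continuousAt) G1
    simpa using this
  have G2 : ∀ z ∈ unitDisk, g z = g 0 * (1 - (starRingEnd ℂ) (φ 0) * z) ^ S := by
    intro z hz
    by_cases h : z = 0
    · subst h; simp
    · rw [G1 z hz h, ← G0]
  obtain ⟨r, hr⟩ : ∃ r : ℝ, (r : ℂ) = g 0 := Complex.conj_eq_iff_real.1 G0.symm |>.imp
    fun _ h => h.symm
  have hSconj : (starRingEnd ℂ) S = S := by simp [hS, map_ofNat]
  have hg0 := hgne 0 zero_mem_disk
  -- the identity for φ
  have E3 : ∀ z ∈ unitDisk, z ≠ 0 → ∀ u ∈ unitDisk,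
      (1 - (starRingEnd ℂ) (φ 0) * z) ^ S * (1 - u * φ z) ^ S =
      (1 - u * φ 0) ^ S * (1 - z * (starRingEnd ℂ) (φ ((starRingEnd ℂ) u))) ^ S := by
    intro z hz hz0 u hu
    by_cases hu0 : u = 0
    · subst hu0
      simp [mul_comm z]
    · have h := E2 z hz hz0 u hu hu0
      rw [G2 z hz, G2 _ (conj_mem_disk hu), map_mul, ← G0, ← hSconj,
        ← conj_cpow _ _ (slitPlane_arg_ne_pi (slit_of_disk hcc (conj_mem_disk hu)))] at h
      rw [hSconj] at h
      simp only [map_sub, map_mul, map_one, conj_conj] at h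
      apply mul_left_cancel₀ hg0
      rw [mul_comm u (φ 0)]
      linear_combination h
  set B := (starRingEnd ℂ) (deriv φ 0) with hB
  have hφB : HasDerivAt (fun u => (starRingEnd ℂ) (φ ((starRingEnd ℂ) u))) B 0 := by
    have h := (hφa 0 zero_mem_disk).differentiableAt.hasDerivAt.conj_conj
    rw [map_zero] at h
    exact h
  have F1 : ∀ z ∈ unitDisk, φ z = φ 0 + B * z / (1 - (starRingEnd ℂ) (φ 0) * z) := by
    intro z hz
    by_cases hz0 : z = 0
    · subst hz0; simp
    have hl : ∀ v : ℂ, HasDerivAt (fun u : ℂ => 1 - u * v) (-v) 0 := by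
      intro v
      simpa using ((hasDerivAt_id (0 : ℂ)).mul_const v).const_sub 1
    have d1 := ((hl (φ z)).cpow_const (c := S) (slit_of_disk zero_mem_disk (hφm z hz))).const_mul
      ((1 - (starRingEnd ℂ) (φ 0) * z) ^ S)
    have d2 := ((hl (φ 0)).cpow_const (c := S) (slit_of_disk zero_mem_disk hc)).mul
      (((hφB.const_mul z).const_sub 1).cpow_const (c := S)
        (slit_of_disk hz (hφm' 0 zero_mem_disk)))
    have hev : (fun u => (1 - (starRingEnd ℂ) (φ 0) * z) ^ S * (1 - u * φ z) ^ S) =ᶠ[nhds 0]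
      ((fun u => (1 - u * φ 0) ^ S) *
        fun u => (1 - z * (starRingEnd ℂ) (φ ((starRingEnd ℂ) u))) ^ S) := by
      filter_upwards [isOpen_unitDisk.mem_nhds zero_mem_disk] with u hu using E3 z hz hz0 u hu
    have h := (d1.congr_of_eventuallyEq hev.symm).unique d2
    have k1 := ne_of_disk hcc hz
    have k2 := cpow_ne_of_disk hcc hz S
    simp only [map_zero, zero_mul, sub_zero, one_cpow, mul_one, one_mul,
      mul_comm z ((starRingEnd ℂ) (φ 0)), cpow_sub _ _ k1, cpow_one] at h
    have h3 : S * (1 - (starRingEnd ℂ) (φ 0) * z) ^ S *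
        φ z = S * (1 - (starRingEnd ℂ) (φ 0) * z) ^ S *
        (φ 0 + B * z / (1 - (starRingEnd ℂ) (φ 0) * z)) := by
      linear_combination -h
    exact mul_left_cancel₀ (mul_ne_zero hs k2) h3
  have hdB : deriv φ 0 = B := by
    have hev : φ =ᶠ[nhds 0] fun z => φ 0 + B * z / (1 - (starRingEnd ℂ) (φ 0) * z) := by
      filter_upwards [isOpen_unitDisk.mem_nhds zero_mem_disk] with z hz using F1 z hz
    rw [hev.deriv_eq]
    have h1 : HasDerivAt (fun z => 1 - (starRingEnd ℂ) (φ 0) * z) (-(starRingEnd ℂ) (φ 0)) 0 := by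
      simpa using ((hasDerivAt_id (0 : ℂ)).const_mul ((starRingEnd ℂ) (φ 0))).const_sub 1
    have h2 := ((((hasDerivAt_id (0 : ℂ)).const_mul B).div h1 (by simp)).const_add (φ 0)).deriv
    simpa using h2
  obtain ⟨b, hb⟩ : ∃ b : ℝ, deriv φ 0 = (b : ℂ) :=
    Complex.conj_eq_iff_real.1 (hB.symm.trans hdB.symm)
  have hf : (n.factorial : ℂ) ≠ 0 := by exact_mod_cast n.factorial_ne_zero
  refine ⟨n.factorial * r, b, ?_, ?_, ?_, hb, ?_, ?_⟩
  · have : r ≠ 0 := by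
      rintro rfl
      exact hg0 (by simpa using hr.symm)
    exact mul_ne_zero (by exact_mod_cast n.factorial_ne_zero) this
  · rintro rfl
    obtain ⟨z, hz, w, hw, hne⟩ := hφnc
    apply hne
    rw [F1 z hz, F1 w hw, ← hdB, hb]
    simp
  · have hev : ψ =ᶠ[nhds 0] fun z => z ^ n * g z := by
      filter_upwards [isOpen_unitDisk.mem_nhds zero_mem_disk] with z hz using hgψ z hz
    rw [hev.iteratedDeriv_eq, iter_pow_mul n (hga 0 zero_mem_disk), ← hr]
    push_cast
    rfl
  · intro z hz
    have k2 := cpow_ne_of_disk hcc hz S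
    rw [hgψ z hz, G2 z hz, ← hr]
    push_cast
    field_simp
  · intro z hz
    rw [F1 z hz, ← hdB, hb]

/-- A bounded operator `D_{ψ,φ,n}` on `A_α²` is self-adjoint iff
`ψ(z) = a z^n/(n!(1-conj(c)z)^{n+α+2})` and `φ(z) = c + bz/(1-conj(c)z)`, where
`a = ψ⁽ⁿ⁾(0)` and `b = φ'(0)` are both nonzero real numbers and `c = φ(0) ∈ 𝔻`. -/
theorem stmt_12 (α : ℝ) (hα : -1 < α) (n : ℕ) (hn : 1 ≤ n)
    (H : Type) [NormedAddCommGroup H] [InnerProductSpace ℂ H] [CompleteSpace H]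
    (M : BergmanModel α H)
    (ψ : ℂ → ℂ) (hψa : AnalyticOnNhd ℂ ψ unitDisk)
    (hψ0 : ∃ z ∈ unitDisk, ψ z ≠ 0)
    (φ : ℂ → ℂ) (hφa : AnalyticOnNhd ℂ φ unitDisk)
    (hφm : ∀ z ∈ unitDisk, φ z ∈ unitDisk)
    (hφnc : ∃ z ∈ unitDisk, ∃ w ∈ unitDisk, φ z ≠ φ w)
    (T : H →L[ℂ] H)
    (hT : ∀ f : H, ∀ z ∈ unitDisk,
      M.emb (T f) z = ψ z * iteratedDeriv n (M.emb f) (φ z)) :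
    ContinuousLinearMap.adjoint T = T ↔
      (∃ a b : ℝ, a ≠ 0 ∧ b ≠ 0 ∧
        iteratedDeriv n ψ 0 = (a : ℂ) ∧ deriv φ 0 = (b : ℂ) ∧
        (∀ z ∈ unitDisk, ψ z = (a : ℂ) * z ^ n /
          ((n.factorial : ℂ) * (1 - (starRingEnd ℂ) (φ 0) * z) ^ ((n : ℂ) + (α : ℂ) + 2))) ∧
        (∀ z ∈ unitDisk, φ z = φ 0 + (b : ℂ) * z / (1 - (starRingEnd ℂ) (φ 0) * z))) := by
  rw [selfAdj_iff hα n M ψ φ hφm T hT]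
  constructor
  · exact forward_analysis hα n hn ψ φ hψ0 hφa hφm hφnc
  · rintro ⟨a, b, -, -, -, -, h1, h2⟩
    exact backward_identity n ψ φ hφm a b h1 h2
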